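/- Let S be a nonempty set, A a nonempty finite set, H > 0 a constant, and let φ_1,…,φ_N : S × A → ℝ^d be feature maps with ‖φ_j(s,a)‖₂ ≤ 1 for all j ∈ [N] and (s,a) ∈ S × A. For parameters (w_j)_{j∈[N]} with w_j ∈ ℝ^d and symmetric positive semidefinite matrices (A_j)_{j∈[N]} in ℝ^{d×d}, define V_{w,A}(s) = min( min_{j∈[N]} max_{a∈A} [ ⟨w_j, φ_j(s,a)⟩ + √(φ_j(s,a)ᵀ A_j φ_j(s,a)) ] , H ). Then for any two parameter tuples (w^{(1)}, A^{(1)}) and (w^{(2)}, A^{(2)}), sup_{s∈S} |V_{w^{(1)},A^{(1)}}(s) − V_{w^{(2)},A^{(2)}}(s)| ≤ max_{j∈[N]} ‖w_j^{(1)} − w_j^{(2)}‖₂ + max_{j∈[N]} √( ‖A_j^{(1)} − A_j^{(2)}‖_F ). -/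

import Mathlib

/-!
STATEMENT 8: Lipschitz/contraction bound for the optimistic value-function
class: `sup_s |V_{w¹,A¹}(s) − V_{w²,A²}(s)| ≤ max_j ‖w¹_j − w²_j‖₂
  + max_j √‖A¹_j − A²_j‖_F`.
-/

open Finset Matrix

/-- Frobenius norm of a matrix. -/
noncomputable def frobNorm {d : ℕ} (M : Matrix (Fin d) (Fin d) ℝ) : ℝ :=
  Real.sqrt (∑ i, ∑ j, (M i j) ^ 2)

/-- The parametric value function
`V_{w,A}(s) = min( min_j max_a [⟨w_j, φ_j(s,a)⟩ + √(φ_j(s,a)ᵀ A_j φ_j(s,a))], H )`. -/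
noncomputable def Vform {S A : Type*} [Fintype A] [Nonempty A] {d N : ℕ} [NeZero N]
    (Hc : ℝ) (φ : Fin N → S × A → Fin d → ℝ)
    (w : Fin N → Fin d → ℝ) (Amat : Fin N → Matrix (Fin d) (Fin d) ℝ)
    (s : S) : ℝ :=
  min
    (Finset.univ.inf' Finset.univ_nonempty fun j : Fin N =>
      Finset.univ.sup' Finset.univ_nonempty fun a : A =>
        w j ⬝ᵥ φ j (s, a)
          + Real.sqrt (φ j (s, a) ⬝ᵥ (Amat j).mulVec (φ j (s, a))))
    Hc

theorem aux_dot {d : ℕ} (x y : Fin d → ℝ) (hy : Real.sqrt (y ⬝ᵥ y) ≤ 1) :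
    x ⬝ᵥ y ≤ Real.sqrt (x ⬝ᵥ x) := by
  have hy1 : y ⬝ᵥ y ≤ 1 := by
    have := (Real.sqrt_le_iff.mp hy).2
    simpa using this
  apply Real.le_sqrt_of_sq_le
  have hcs : (x ⬝ᵥ y) ^ 2 ≤ (x ⬝ᵥ x) * (y ⬝ᵥ y) := by
    have := Finset.sum_mul_sq_le_sq_mul_sq Finset.univ x y
    simpa only [dotProduct, ← pow_two] using this
  have hx : 0 ≤ x ⬝ᵥ x := Finset.sum_nonneg fun i _ => mul_self_nonneg (x i)
  nlinarith

theorem aux_quad {d : ℕ} (M : Matrix (Fin d) (Fin d) ℝ) (y : Fin d → ℝ)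
    (hy : Real.sqrt (y ⬝ᵥ y) ≤ 1) : y ⬝ᵥ M.mulVec y ≤ frobNorm M := by
  rw [dotProduct_comm]
  refine (aux_dot _ y hy).trans ?_
  unfold frobNorm
  apply Real.sqrt_le_sqrt
  have hy1 : y ⬝ᵥ y ≤ 1 := by
    have := (Real.sqrt_le_iff.mp hy).2
    simpa using this
  change ∑ i, M.mulVec y i * M.mulVec y i ≤ _
  apply Finset.sum_le_sum
  intro i _
  have h := Finset.sum_mul_sq_le_sq_mul_sq Finset.univ (M i) y
  have hM : 0 ≤ ∑ j, (M i j) ^ 2 := Finset.sum_nonneg fun j _ => sq_nonneg _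
  have h2 : ∑ j, y j ^ 2 ≤ 1 := by simpa only [dotProduct, ← pow_two] using hy1
  have h3 : M.mulVec y i = ∑ j, M i j * y j := rfl
  rw [h3]
  nlinarith

theorem aux_sqrt (a b c : ℝ) (hb : 0 ≤ b) (hc : 0 ≤ c) (h : a ≤ b + c) :
    Real.sqrt a ≤ Real.sqrt b + Real.sqrt c := by
  apply Real.sqrt_le_iff.mpr
  have h1 := Real.sqrt_nonneg b
  have h2 := Real.sqrt_nonneg c
  refine ⟨by positivity, ?_⟩
  nlinarith [Real.sq_sqrt hb, Real.sq_sqrt hc, mul_nonneg h1 h2]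

theorem aux_side {S A : Type*} [Fintype A] [Nonempty A]
    {d N : ℕ} [NeZero N] (Hc : ℝ)
    (φ : Fin N → S × A → Fin d → ℝ)
    (hφ : ∀ j sa, Real.sqrt (φ j sa ⬝ᵥ φ j sa) ≤ 1)
    (w1 w2 : Fin N → Fin d → ℝ)
    (A1 A2 : Fin N → Matrix (Fin d) (Fin d) ℝ)
    (hA2 : ∀ j, (A2 j).PosSemidef) (s : S) (C D : ℝ)
    (hC : ∀ j, Real.sqrt ((w1 j - w2 j) ⬝ᵥ (w1 j - w2 j)) ≤ C)
    (hD : ∀ j, Real.sqrt (frobNorm (A1 j - A2 j)) ≤ D) :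
    Vform Hc φ w1 A1 s - (C + D) ≤ Vform Hc φ w2 A2 s := by
  have hC0 : 0 ≤ C := (Real.sqrt_nonneg _).trans (hC 0)
  have hD0 : 0 ≤ D := (Real.sqrt_nonneg _).trans (hD 0)
  unfold Vform
  apply le_min
  · apply Finset.le_inf'
    intro j _
    rw [sub_le_iff_le_add]
    refine (min_le_left _ _).trans ((Finset.inf'_le _ (Finset.mem_univ j)).trans ?_)
    apply Finset.sup'_le
    intro a _
    have h0 := Finset.le_sup' (fun a : A => w2 j ⬝ᵥ φ j (s, a)
          + Real.sqrt (φ j (s, a) ⬝ᵥ (A2 j).mulVec (φ j (s, a)))) (Finset.mem_univ a)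
    have h1 := aux_dot (w1 j - w2 j) _ (hφ j (s, a))
    rw [sub_dotProduct] at h1
    have h2 := aux_quad (A1 j - A2 j) _ (hφ j (s, a))
    rw [Matrix.sub_mulVec, dotProduct_sub] at h2
    have hb : 0 ≤ φ j (s, a) ⬝ᵥ (A2 j).mulVec (φ j (s, a)) := by
      simpa using (hA2 j).dotProduct_mulVec_nonneg (φ j (s, a))
    have h3 := aux_sqrt (φ j (s, a) ⬝ᵥ (A1 j).mulVec (φ j (s, a))) _
      (frobNorm (A1 j - A2 j)) hb (Real.sqrt_nonneg _) (by linarith)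
    have := hC j
    have := hD j
    linarith
  · have := min_le_right (Finset.univ.inf' Finset.univ_nonempty fun j : Fin N =>
      Finset.univ.sup' Finset.univ_nonempty fun a : A =>
        w1 j ⬝ᵥ φ j (s, a)
          + Real.sqrt (φ j (s, a) ⬝ᵥ (A1 j).mulVec (φ j (s, a)))) Hc
    linarith

theorem aux_frob {d : ℕ} (M P : Matrix (Fin d) (Fin d) ℝ) :
    frobNorm (M - P) = frobNorm (P - M) := by
  unfold frobNorm
  congr 1
  refine Finset.sum_congr rfl fun i _ => Finset.sum_congr rfl fun j _ => ?_
  simp only [Matrix.sub_apply]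
  ring

theorem stmt8 {S A : Type*} [Nonempty S] [Fintype A] [Nonempty A]
    {d N : ℕ} [NeZero N]
    (Hc : ℝ) (hHc : 0 < Hc)
    (φ : Fin N → S × A → Fin d → ℝ)
    (hφ : ∀ j sa, Real.sqrt (φ j sa ⬝ᵥ φ j sa) ≤ 1)
    (w1 w2 : Fin N → Fin d → ℝ)
    (A1 A2 : Fin N → Matrix (Fin d) (Fin d) ℝ)
    (hA1 : ∀ j, (A1 j).PosSemidef) (hA2 : ∀ j, (A2 j).PosSemidef) :
    ∀ s : S,
      |Vform Hc φ w1 A1 s - Vform Hc φ w2 A2 s|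
        ≤ (Finset.univ.sup' Finset.univ_nonempty fun j : Fin N =>
              Real.sqrt ((w1 j - w2 j) ⬝ᵥ (w1 j - w2 j)))
          + Finset.univ.sup' Finset.univ_nonempty fun j : Fin N =>
              Real.sqrt (frobNorm (A1 j - A2 j)) := by
  intro s
  have hC : ∀ j, Real.sqrt ((w1 j - w2 j) ⬝ᵥ (w1 j - w2 j)) ≤
      Finset.univ.sup' Finset.univ_nonempty fun j : Fin N => Real.sqrt ((w1 j - w2 j) ⬝ᵥ (w1 j - w2 j)) := fun j => Finset.le_sup' (fun j : Fin N =>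
    Real.sqrt ((w1 j - w2 j) ⬝ᵥ (w1 j - w2 j))) (Finset.mem_univ j)
  have hD : ∀ j, Real.sqrt (frobNorm (A1 j - A2 j)) ≤
      Finset.univ.sup' Finset.univ_nonempty fun j : Fin N => Real.sqrt (frobNorm (A1 j - A2 j)) := fun j => Finset.le_sup' (fun j : Fin N =>
    Real.sqrt (frobNorm (A1 j - A2 j))) (Finset.mem_univ j)
  have h1 := aux_side Hc φ hφ w1 w2 A1 A2 hA2 s _ _ hC hD
  have h2 := aux_side Hc φ hφ w2 w1 A2 A1 hA1 s _ _
    (fun j => by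
      rw [← neg_sub (w1 j) (w2 j), neg_dotProduct_neg]
      exact hC j)
    (fun j => by
      rw [aux_frob]
      exact hD j)
  rw [abs_sub_le_iff]
  constructor <;> linarith
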